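/- arXiv:2409.00528 — 2 statements merged into one kernel-verified Lean document; each statement's English description precedes it below -/
import Mathlib

section
/- Let V, H, W, Z be real Hilbert spaces, let ι : V → H be an injective compact continuous linear map, and let A : V → W and B : V → Z be continuous linear operators such that Ker(A) ∩ Ker(B) = {0} and such that there exists a constant C > 0 with ‖v‖_V ≤ C(‖ιv‖_H + ‖Av‖_W) for all v ∈ V. Then there exists a constant M > 0 such that ‖ιv‖_H ≤ M(‖Bv‖_Z + ‖Av‖_W) for all v ∈ V. -/
/-- Abstract Poincaré-type inequality: given Hilbert spaces `V, H, W, Z`, an injective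
compact continuous linear embedding `ι : V → H`, and continuous linear operators
`A : V → W`, `B : V → Z` with trivial joint kernel and satisfying the coercivity
estimate `‖v‖ ≤ C (‖ι v‖ + ‖A v‖)`, there is `M > 0` with
`‖ι v‖ ≤ M (‖B v‖ + ‖A v‖)` for all `v`. -/
theorem abstract_poincare_inequality
    {V H W Z : Type*}
    [NormedAddCommGroup V] [InnerProductSpace ℝ V] [CompleteSpace V]
    [NormedAddCommGroup H] [InnerProductSpace ℝ H] [CompleteSpace H]
    [NormedAddCommGroup W] [InnerProductSpace ℝ W] [CompleteSpace W]
    [NormedAddCommGroup Z] [InnerProductSpace ℝ Z] [CompleteSpace Z]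
    (ι : V →L[ℝ] H) (A : V →L[ℝ] W) (B : V →L[ℝ] Z)
    (hι_inj : Function.Injective (⇑ι))
    (hι_cpt : IsCompactOperator (⇑ι))
    (hker : ∀ v : V, A v = 0 → B v = 0 → v = 0)
    (hcoer : ∃ C : ℝ, 0 < C ∧ ∀ v : V, ‖v‖ ≤ C * (‖ι v‖ + ‖A v‖)) :
    ∃ M : ℝ, 0 < M ∧ ∀ v : V, ‖ι v‖ ≤ M * (‖B v‖ + ‖A v‖) := by
  obtain ⟨C, hC, hco⟩ := hcoer
  by_contra! hcon
  have hex : ∀ n : ℕ, ∃ u : V, ‖ι u‖ = 1 ∧ ‖B u‖ + ‖A u‖ ≤ 1 / ((n : ℝ) + 1) := by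
    intro n
    have hn : (0 : ℝ) < (n : ℝ) + 1 := by positivity
    obtain ⟨v, hv⟩ := hcon ((n : ℝ) + 1) hn
    have hpos : 0 < ‖ι v‖ := lt_of_le_of_lt (by positivity) hv
    refine ⟨(‖ι v‖)⁻¹ • v, ?_, ?_⟩
    · rw [map_smul, norm_smul, norm_inv, norm_norm, inv_mul_cancel₀ hpos.ne']
    · rw [map_smul, map_smul, norm_smul, norm_smul, norm_inv, norm_norm, ← mul_add,
        le_div_iff₀ hn, mul_assoc, inv_mul_le_iff₀ hpos]
      linarith
  choose u hu1 hu2 using hex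
  have hlim := tendsto_one_div_add_atTop_nhds_zero_nat (𝕜 := ℝ)
  have hA : Filter.Tendsto (fun n => A (u n)) Filter.atTop (nhds 0) :=
    squeeze_zero_norm (fun n => le_trans (by linarith [norm_nonneg (B (u n))]) (hu2 n)) hlim
  have hB : Filter.Tendsto (fun n => B (u n)) Filter.atTop (nhds 0) :=
    squeeze_zero_norm (fun n => le_trans (by linarith [norm_nonneg (A (u n))]) (hu2 n)) hlim
  have hbd : ∀ n, ‖u n‖ ≤ C * 2 := by
    intro n
    refine (hco (u n)).trans (mul_le_mul_of_nonneg_left ?_ hC.le)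
    have h1 : 1 / ((n : ℝ) + 1) ≤ 1 := by
      rw [div_le_one (by positivity)]
      linarith [(Nat.cast_nonneg n : (0 : ℝ) ≤ n)]
    linarith [hu1 n, hu2 n, norm_nonneg (B (u n))]
  obtain ⟨K, hK, hsub⟩ :=
    IsCompactOperator.image_closedBall_subset_compact (f := (ι : V →ₗ[ℝ] H)) hι_cpt (C * 2)
  obtain ⟨h, -, φ, hφ, hconv⟩ := hK.tendsto_subseq (x := fun n => ι (u n))
    (fun n => hsub ⟨u n, by simpa using hbd n, rfl⟩)
  have hT : AntilipschitzWith (Real.toNNReal (C * 2)) (ι.prod A) := by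
    refine AddMonoidHomClass.antilipschitz_of_bound _ fun v => ?_
    rw [Real.coe_toNNReal _ (by positivity), mul_assoc]
    refine (hco v).trans (mul_le_mul_of_nonneg_left ?_ hC.le)
    have h1 := norm_fst_le (ι.prod A v)
    have h2 := norm_snd_le (ι.prod A v)
    simp only [ContinuousLinearMap.prod_apply] at h1 h2 ⊢
    linarith
  have hA' := hA.comp hφ.tendsto_atTop
  have hB' := hB.comp hφ.tendsto_atTop
  have hTc : CauchySeq (fun n => ι.prod A (u (φ n))) :=
    (hconv.prodMk_nhds hA').cauchySeq
  have hc : CauchySeq (fun n => u (φ n)) :=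
    ((hT.isUniformInducing (ι.prod A).uniformContinuous).cauchy_map_iff).1
      (by rw [Filter.map_map]; exact hTc)
  obtain ⟨w, hw⟩ := cauchySeq_tendsto_of_complete hc
  have hAw : A w = 0 := tendsto_nhds_unique ((A.continuous.tendsto w).comp hw) hA'
  have hBw : B w = 0 := tendsto_nhds_unique ((B.continuous.tendsto w).comp hw) hB'
  have hιw : ‖ι w‖ = 1 := by
    refine tendsto_nhds_unique ((ι.continuous.tendsto w).comp hw).norm ?_
    simp [hu1]
  rw [hker w hAw hBw] at hιw
  simp at hιw
end

section
/- Let V, H, W, Z be real Hilbert spaces, let ι : V → H be an injective compact continuous linear map, and let A : V → W and B : V → Z be continuous linear operators such that Ker(A) ∩ Ker(B) = {0} and such that there exists a constant C > 0 with ‖v‖_V ≤ C(‖ιv‖_H + ‖Av‖_W) for all v ∈ V. Then the norm ‖v‖_V is equivalent to ‖Av‖_W + ‖Bv‖_Z: there exist constants m₁, m₂ > 0 such that m₁‖v‖_V ≤ ‖Av‖_W + ‖Bv‖_Z ≤ m₂‖v‖_V for all v ∈ V. -/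
/-- Abstract Poincaré-type inequality, norm-equivalence form: under the hypotheses of
the abstract Poincaré lemma, the norm `‖v‖_V` is equivalent to `‖A v‖_W + ‖B v‖_Z`. -/
theorem abstract_poincare_norm_equivalence
    {V H W Z : Type*}
    [NormedAddCommGroup V] [InnerProductSpace ℝ V] [CompleteSpace V]
    [NormedAddCommGroup H] [InnerProductSpace ℝ H] [CompleteSpace H]
    [NormedAddCommGroup W] [InnerProductSpace ℝ W] [CompleteSpace W]
    [NormedAddCommGroup Z] [InnerProductSpace ℝ Z] [CompleteSpace Z]
    (ι : V →L[ℝ] H) (A : V →L[ℝ] W) (B : V →L[ℝ] Z)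
    (hι_inj : Function.Injective (⇑ι))
    (hι_cpt : IsCompactOperator (⇑ι))
    (hker : ∀ v : V, A v = 0 → B v = 0 → v = 0)
    (hcoer : ∃ C : ℝ, 0 < C ∧ ∀ v : V, ‖v‖ ≤ C * (‖ι v‖ + ‖A v‖)) :
    ∃ m₁ m₂ : ℝ, 0 < m₁ ∧ 0 < m₂ ∧
      ∀ v : V, m₁ * ‖v‖ ≤ ‖A v‖ + ‖B v‖ ∧ ‖A v‖ + ‖B v‖ ≤ m₂ * ‖v‖ := by
  obtain ⟨C, hC, hcoer⟩ := hcoer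
  suffices hlow : ∃ m : ℝ, 0 < m ∧ ∀ v : V, m * ‖v‖ ≤ ‖A v‖ + ‖B v‖ by
    obtain ⟨m, hm, h⟩ := hlow
    refine ⟨m, ‖A‖ + ‖B‖ + 1, hm, by positivity, fun v => ⟨h v, ?_⟩⟩
    have h1 := A.le_opNorm v
    have h2 := B.le_opNorm v
    nlinarith [norm_nonneg v]
  by_contra! hcon
  -- a normalised sequence on which `A` and `B` tend to zero
  have hseq : ∀ n : ℕ, ∃ u : V, ‖u‖ = 1 ∧ ‖A u‖ + ‖B u‖ ≤ 1 / ((n : ℝ) + 1) := by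
    intro n
    obtain ⟨v, hv⟩ := hcon (1 / ((n : ℝ) + 1)) (by positivity)
    have hv0 : 0 < ‖v‖ := by
      rcases (norm_nonneg v).eq_or_lt with h | h
      · rw [← h, mul_zero] at hv
        linarith [norm_nonneg (A v), norm_nonneg (B v)]
      · exact h
    refine ⟨‖v‖⁻¹ • v, ?_, ?_⟩
    · rw [norm_smul, norm_inv, norm_norm, inv_mul_cancel₀ hv0.ne']
    · rw [map_smul, map_smul, norm_smul, norm_smul, norm_inv, norm_norm, ← mul_add,
        inv_mul_le_iff₀ hv0, mul_comm]
      exact hv.le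
  choose u hu1 hu using hseq
  have hA : Filter.Tendsto (fun n => A (u n)) Filter.atTop (nhds 0) :=
    squeeze_zero_norm (fun n => by linarith [hu n, norm_nonneg (B (u n))])
      tendsto_one_div_add_atTop_nhds_zero_nat
  have hB : Filter.Tendsto (fun n => B (u n)) Filter.atTop (nhds 0) :=
    squeeze_zero_norm (fun n => by linarith [hu n, norm_nonneg (A (u n))])
      tendsto_one_div_add_atTop_nhds_zero_nat
  obtain ⟨K, hK, hKsub⟩ :=
    IsCompactOperator.image_closedBall_subset_compact (f := (ι : V →ₗ[ℝ] H)) hι_cpt 1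
  obtain ⟨y, -, φ, hφ, hy⟩ := hK.tendsto_subseq (x := fun n => ι (u n))
    (fun n => hKsub ⟨u n, by simp [hu1], rfl⟩)
  have hanti : AntilipschitzWith (2 * C).toNNReal (ι.prod A) := by
    refine AddMonoidHomClass.antilipschitz_of_bound (ι.prod A) (fun v => ?_)
    rw [Real.coe_toNNReal _ (by positivity)]
    have h1 : ‖ι v‖ ≤ ‖(ι.prod A) v‖ := norm_fst_le ((ι.prod A) v)
    have h2 : ‖A v‖ ≤ ‖(ι.prod A) v‖ := norm_snd_le ((ι.prod A) v)
    nlinarith [hcoer v]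
  have hemb := hanti.isClosedEmbedding (ι.prod A).uniformContinuous
  have hlim : Filter.Tendsto (fun n => (ι.prod A) (u (φ n))) Filter.atTop (nhds (y, 0)) :=
    Filter.Tendsto.prodMk_nhds hy (hA.comp hφ.tendsto_atTop)
  obtain ⟨w, hw⟩ := hemb.isClosed_range.mem_of_tendsto hlim
    (Filter.Eventually.of_forall fun n => Set.mem_range_self _)
  rw [← hw] at hlim
  have huw : Filter.Tendsto (fun n => u (φ n)) Filter.atTop (nhds w) :=
    hemb.isInducing.tendsto_nhds_iff.mpr hlim
  have hAw : A w = 0 := tendsto_nhds_unique ((A.continuous.tendsto w).comp huw)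
    (hA.comp hφ.tendsto_atTop)
  have hBw : B w = 0 := tendsto_nhds_unique ((B.continuous.tendsto w).comp huw)
    (hB.comp hφ.tendsto_atTop)
  have hn : ‖w‖ = 1 := tendsto_nhds_unique huw.norm (by simp [hu1])
  rw [hker w hAw hBw, norm_zero] at hn
  exact zero_ne_one hn
end
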